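/- The map from SL(2,ℂ) to linear transformations of 2×2 complex Hermitian matrices sending M to the map X ↦ M X Mᴴ is a group homomorphism whose kernel is {I, -I}. -/

import Mathlib

/-!
If `A X Aᴴ = X` for every Hermitian `X`, then `X = 1` shows that `A` is unitary, and multiplying by
`A` on the right turns the equation into `A X = X A`. A matrix commuting with all Hermitian
matrices is scalar, because the off-diagonal matrix units are products of two Hermitian matrices.
For determinant one and size two, the scalar is a square root of `1`.
-/

open Matrix

section StarAlgebra

variable (k A : Type*) [CommSemiring k] [Star k] [TrivialStar k] [Ring A] [StarRing A]
  [Algebra k A] [StarModule k A]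

/-- The congruence action `a ↦ (x ↦ a x a⋆)` of the multiplicative monoid of a star algebra on its
self-adjoint elements. The star on `k` is trivial so that these elements form a `k`-module. -/
def selfAdjointCongr : A →* Module.End k (selfAdjoint A) where
  toFun a :=
    { toFun x := ⟨a * x * star a, x.2.conjugate a⟩
      map_add' x y := Subtype.ext (by simp [mul_add, add_mul])
      map_smul' r x := Subtype.ext (by simp) }
  map_one' := LinearMap.ext fun x => Subtype.ext (by simp)
  map_mul' a b := LinearMap.ext fun x => Subtype.ext (by simp [mul_assoc])

variable {A}

@[simp]
theorem coe_selfAdjointCongr_apply (a : A) (x : selfAdjoint A) :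
    (selfAdjointCongr k A a x : A) = a * x * star a :=
  rfl

theorem selfAdjointCongr_eq_one_iff_forall {a : A} :
    selfAdjointCongr k A a = 1 ↔ ∀ x, IsSelfAdjoint x → a * x * star a = x := by
  simp [LinearMap.ext_iff, Subtype.ext_iff, selfAdjoint.mem_iff, isSelfAdjoint_iff]

theorem selfAdjointCongr_eq_one_iff [IsDedekindFiniteMonoid A] {a : A} :
    selfAdjointCongr k A a = 1 ↔ a ∈ unitary A ∧ ∀ x, IsSelfAdjoint x → Commute a x := by
  rw [selfAdjointCongr_eq_one_iff_forall]
  constructor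
  · intro fixes
    have mul_star : a * star a = 1 := by simpa using fixes 1 (.one A)
    have star_mul : star a * a = 1 := mul_eq_one_symm mul_star
    refine ⟨⟨star_mul, mul_star⟩, fun x hx => ?_⟩
    calc a * x = a * x * star a * a := by rw [mul_assoc (a * x), star_mul, mul_one]
      _ = x * a := by rw [fixes x hx]
  · rintro ⟨⟨-, mul_star⟩, comm⟩ x hx
    rw [comm x hx, mul_assoc, mul_star, mul_one]

end StarAlgebra

section Matrix

variable {n R : Type*} [Fintype n] [DecidableEq n]

theorem mem_range_scalar_of_commute_isSelfAdjoint [Semiring R] [StarRing R] {M : Matrix n n R}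
    (hM : ∀ X, IsSelfAdjoint X → Commute M X) : M ∈ Set.range (scalar n) := by
  refine mem_range_scalar_of_commute_single fun i j hij => .symm ?_
  have diag : IsSelfAdjoint (single i i (1 : R)) := by
    simp [isSelfAdjoint_iff, star_eq_conjTranspose]
  have swap : IsSelfAdjoint (single i j (1 : R) + single j i 1) := by
    simp [isSelfAdjoint_iff, star_eq_conjTranspose, add_comm]
  have single_eq_mul :
      single i j (1 : R) = single i i 1 * (single i j 1 + single j i 1) := by
    simp [mul_add, hij]
  rw [single_eq_mul]
  exact (hM _ diag).mul_right (hM _ swap)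

variable [CommRing R]

theorem specialLinearGroup_mem_center_iff_commute_isSelfAdjoint [StarRing R]
    {M : Matrix.SpecialLinearGroup n R} :
    M ∈ Subgroup.center (Matrix.SpecialLinearGroup n R) ↔
      ∀ X, IsSelfAdjoint X → Commute M.val X := by
  rw [Matrix.SpecialLinearGroup.mem_center_iff]
  constructor
  · rintro ⟨r, -, hr⟩ X -
    exact hr ▸ scalar_commute r (Commute.all r) X
  · intro comm
    obtain ⟨r, hr⟩ := mem_range_scalar_of_commute_isSelfAdjoint comm
    exact ⟨r, by simpa [← hr] using M.det_coe, hr⟩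

theorem specialLinearGroup_mem_center_fin_two_iff [NoZeroDivisors R]
    {M : Matrix.SpecialLinearGroup (Fin 2) R} :
    M ∈ Subgroup.center (Matrix.SpecialLinearGroup (Fin 2) R) ↔ M.val = 1 ∨ M.val = -1 := by
  simp only [Matrix.SpecialLinearGroup.mem_center_iff, Fintype.card_fin, sq_eq_one_iff,
    or_and_right, exists_or, exists_eq_left, map_one, map_neg, @eq_comm _ _ M.val]

theorem specialLinearGroup_mem_center_and_mem_unitary_fin_two_iff [NoZeroDivisors R] [StarRing R]
    {M : Matrix.SpecialLinearGroup (Fin 2) R} :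
    M ∈ Subgroup.center (Matrix.SpecialLinearGroup (Fin 2) R) ∧
        M.val ∈ unitary (Matrix (Fin 2) (Fin 2) R) ↔
      M.val = 1 ∨ M.val = -1 := by
  rw [specialLinearGroup_mem_center_fin_two_iff, and_iff_left_iff_imp]
  rintro (h | h) <;> simp [h, Unitary.mem_iff]

end Matrix

theorem sl2c_to_hermitian_action_hom_with_kernel_general
    (k n R : Type*) [CommSemiring k] [Star k] [TrivialStar k] [Fintype n] [DecidableEq n]
    [CommRing R] [StarRing R] [Algebra k R] [StarModule k R] :
    ∃ φ : Matrix.SpecialLinearGroup n R →*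
        LinearMap.GeneralLinearGroup k (selfAdjoint (Matrix n n R)),
      (∀ (M : Matrix.SpecialLinearGroup n R) (X : selfAdjoint (Matrix n n R)),
        ((φ M).val X : Matrix n n R) = M.val * (X : Matrix n n R) * M.valᴴ) ∧
      (∀ M : Matrix.SpecialLinearGroup n R,
        φ M = 1 ↔
          M ∈ Subgroup.center (Matrix.SpecialLinearGroup n R) ∧
            M.val ∈ unitary (Matrix n n R)) := by
  refine ⟨(Units.map (selfAdjointCongr k (Matrix n n R))).comp Matrix.SpecialLinearGroup.toGL,
    fun _ _ => rfl, fun M => ?_⟩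
  rw [specialLinearGroup_mem_center_iff_commute_isSelfAdjoint, and_comm,
    ← selfAdjointCongr_eq_one_iff k, Units.ext_iff]
  rfl

theorem sl2c_to_hermitian_action_hom_with_kernel :
    ∃ φ : Matrix.SpecialLinearGroup (Fin 2) ℂ →*
        LinearMap.GeneralLinearGroup ℝ (selfAdjoint (Matrix (Fin 2) (Fin 2) ℂ)),
      (∀ (M : Matrix.SpecialLinearGroup (Fin 2) ℂ)
         (X : selfAdjoint (Matrix (Fin 2) (Fin 2) ℂ)),
        (((φ M).val X : selfAdjoint (Matrix (Fin 2) (Fin 2) ℂ)) : Matrix (Fin 2) (Fin 2) ℂ)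
          = M.val * (X : Matrix (Fin 2) (Fin 2) ℂ) * (M.val)ᴴ) ∧
      (∀ M : Matrix.SpecialLinearGroup (Fin 2) ℂ,
        φ M = 1 ↔ M.val = 1 ∨ M.val = -1) := by
  simpa only [specialLinearGroup_mem_center_and_mem_unitary_fin_two_iff] using
    sl2c_to_hermitian_action_hom_with_kernel_general ℝ (Fin 2) ℂ
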